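/- arXiv:math-ph/0512068 — 2 statements merged into one kernel-verified Lean document; each statement's English description precedes it below -/
import Mathlib

section
/- If A and B are two-dimensional spacelike linear subspaces of Minkowski spacetime R^{1+3}, then there exists a two-dimensional spacelike linear subspace C such that B is the image of A under the orthogonal reflection by C (i.e., the linear map that is the identity on C and minus the identity on the Lorentz-orthogonal complement of C). -/
noncomputable section

/-- Minkowski spacetime ℝ^{1+3}. -/
abbrev V4 : Type := Fin 4 → ℝ

/-- The Minkowski metric of signature (+,-,-,-). -/
def mg (x y : V4) : ℝ := x 0 * y 0 - x 1 * y 1 - x 2 * y 2 - x 3 * y 3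

/-- A two-dimensional spacelike linear subspace. -/
def IsSpacelikePlane (S : Submodule ℝ V4) : Prop :=
  Module.finrank ℝ S = 2 ∧ ∀ x ∈ S, x ≠ 0 → mg x x < 0

/-- `j` is the orthogonal reflection by the spacelike plane `S`: it fixes `S`
pointwise and acts as `-1` on the Lorentz-orthogonal complement of `S`. -/
def IsReflectionBy (S : Submodule ℝ V4) (j : V4 →ₗ[ℝ] V4) : Prop :=
  (∀ x ∈ S, j x = x) ∧ ∀ x, (∀ s ∈ S, mg x s = 0) → j x = -x

/-! A spacelike plane is positive definite for `-mg`. Two positive definite subspaces `A`, `B` of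
the same finite dimension have *principal bases*: orthonormal bases `aᵢ` of `A` and `bᵢ` of `B`
with `β aᵢ bⱼ = σᵢ δᵢⱼ` and `σᵢ ≥ 0`, obtained from a singular value decomposition of the pairing
between `A` and `B`. The vectors `aᵢ + bᵢ` are then orthogonal with squares `2 (1 + σᵢ) > 0`, so
they span a positive definite `C`, and every `aᵢ - bᵢ` is orthogonal to `C`. Hence the reflection by
`C` exchanges `aᵢ` and `bᵢ`. -/

open Module Submodule

open scoped InnerProductSpace

section SingularValueDecomposition

variable {𝕜 E F : Type*} [RCLike 𝕜] [NormedAddCommGroup E] [InnerProductSpace 𝕜 E]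
  [FiniteDimensional 𝕜 E] [NormedAddCommGroup F] [InnerProductSpace 𝕜 F] [FiniteDimensional 𝕜 F]
  {n : ℕ}

theorem exists_orthonormalBasis_pairwise_inner_map_eq_zero (hE : finrank 𝕜 E = n)
    (T : E →ₗ[𝕜] F) :
    ∃ e : OrthonormalBasis (Fin n) 𝕜 E, Pairwise fun i j ↦ ⟪T (e i), T (e j)⟫_𝕜 = 0 := by
  refine ⟨T.isSymmetric_adjoint_comp_self.eigenvectorBasis hE, fun i j hij ↦ ?_⟩
  beta_reduce
  rw [← T.adjoint_inner_right, ← LinearMap.comp_apply,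
    T.isSymmetric_adjoint_comp_self.apply_eigenvectorBasis, inner_smul_right,
    OrthonormalBasis.inner_eq_zero _ hij, mul_zero]

theorem exists_orthonormalBasis_map_eq_norm_smul (hE : finrank 𝕜 E = n) (hF : finrank 𝕜 F = n)
    (T : E →ₗ[𝕜] F) :
    ∃ (e : OrthonormalBasis (Fin n) 𝕜 E) (f : OrthonormalBasis (Fin n) 𝕜 F),
      ∀ i, T (e i) = (‖T (e i)‖ : 𝕜) • f i := by
  obtain ⟨e, he⟩ := exists_orthonormalBasis_pairwise_inner_map_eq_zero hE T
  have hcard : finrank 𝕜 F = Fintype.card (Fin n) := by rw [hF, Fintype.card_fin]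
  refine ⟨e, InnerProductSpace.gramSchmidtOrthonormalBasis hcard fun i ↦ T (e i), fun i ↦ ?_⟩
  by_cases hi : T (e i) = 0
  · simp [hi]
  · rw [InnerProductSpace.gramSchmidtOrthonormalBasis_apply_of_orthogonal hcard he hi, smul_smul,
      mul_inv_cancel₀ (by simpa using hi), one_smul]

end SingularValueDecomposition

theorem exists_orthonormalBasis_bilin_eq_ite {E F : Type*} [NormedAddCommGroup E]
    [InnerProductSpace ℝ E] [FiniteDimensional ℝ E] [NormedAddCommGroup F] [InnerProductSpace ℝ F]
    [FiniteDimensional ℝ F] {n : ℕ} (hE : finrank ℝ E = n) (hF : finrank ℝ F = n)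
    (φ : E →ₗ[ℝ] F →ₗ[ℝ] ℝ) :
    ∃ (e : OrthonormalBasis (Fin n) ℝ E) (f : OrthonormalBasis (Fin n) ℝ F) (σ : Fin n → ℝ),
      (∀ i, 0 ≤ σ i) ∧ ∀ i k, φ (e i) (f k) = if i = k then σ i else 0 := by
  have hnondeg : (innerₗ F).Nondegenerate :=
    ⟨fun x hx ↦ inner_self_eq_zero.1 (hx x), fun x hx ↦ inner_self_eq_zero.1 (hx x)⟩
  let T : E →ₗ[ℝ] F := (LinearMap.BilinForm.toDual (innerₗ F) hnondeg).symm ∘ₗ φ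
  have hT (x : E) (y : F) : φ x y = ⟪T x, y⟫_ℝ :=
    (LinearMap.BilinForm.apply_toDual_symm_apply (hB := hnondeg) (φ x) y).symm
  obtain ⟨e, f, hef⟩ := exists_orthonormalBasis_map_eq_norm_smul hE hF T
  refine ⟨e, f, fun i ↦ ‖T (e i)‖, fun i ↦ norm_nonneg _, fun i k ↦ ?_⟩
  rw [hT, hef, real_inner_smul_left, f.inner_eq_ite, mul_ite, mul_one, mul_zero]
  rfl

theorem span_range_coe_basis {R M ι : Type*} [Semiring R] [AddCommMonoid M] [Module R M]
    {S : Submodule R M} (v : Basis ι R S) : span R (Set.range fun i ↦ (v i : M)) = S := by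
  calc span R (Set.range fun i ↦ (v i : M))
      = (span R (Set.range v)).map S.subtype := by
        rw [map_span, ← Set.range_comp]
        rfl
    _ = S := by rw [v.span_eq, map_subtype_top]

section Reflection

variable {R V ι : Type*} [CommRing R] [AddCommGroup V] [Module R V] {β : LinearMap.BilinForm R V}

/-- `j` is the `β`-orthogonal reflection by `C`. No complementarity of `C` and its orthogonal
complement is built in, so `j` is unique only when the two span the space. -/
structure IsOrthogonalReflection (β : LinearMap.BilinForm R V) (C : Submodule R V)
    (j : V →ₗ[R] V) : Prop where
  apply_of_mem : ∀ x ∈ C, j x = x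
  apply_of_mem_orthogonal : ∀ x ∈ β.orthogonal C, j x = -x

theorem IsOrthogonalReflection.apply_eq_of_add_mem_of_sub_mem (h2 : IsUnit (2 : R))
    {C : Submodule R V} {j : V →ₗ[R] V} (hj : IsOrthogonalReflection β C j) {x y : V}
    (hadd : x + y ∈ C) (hsub : x - y ∈ β.orthogonal C) : j x = y := by
  have hsum : j x + j y = x + y := by rw [← map_add, hj.apply_of_mem _ hadd]
  have hdiff : j x - j y = y - x := by
    rw [← map_sub, hj.apply_of_mem_orthogonal _ hsub, neg_sub]
  refine h2.smul_left_cancel.1 ?_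
  calc (2 : R) • j x = (j x + j y) + (j x - j y) := by module
    _ = (2 : R) • y := by rw [hsum, hdiff]; module

variable {c : ι → V}

theorem mem_orthogonal_span_range_iff {x : V} :
    x ∈ β.orthogonal (span R (Set.range c)) ↔ ∀ i, β (c i) x = 0 := by
  refine ⟨fun hx i ↦ hx _ (subset_span ⟨i, rfl⟩), fun hx ↦ ?_⟩
  have : span R (Set.range c) ≤ LinearMap.ker (β.flip x) := by
    rw [span_le]
    rintro _ ⟨i, rfl⟩
    exact hx i
  exact fun y hy ↦ this hy

theorem bilin_sum_smul_self [Fintype ι] (hc : β.iIsOrtho c) (t : ι → R) :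
    β (∑ i, t i • c i) (∑ i, t i • c i) = ∑ i, t i ^ 2 * β (c i) (c i) := by
  rw [LinearMap.BilinForm.sum_left]
  refine Finset.sum_congr rfl fun i _ ↦ ?_
  rw [LinearMap.BilinForm.sum_right, Finset.sum_eq_single i ?_ (by simp)]
  · simp only [map_smul, LinearMap.smul_apply, smul_eq_mul]
    ring
  · intro k _ hki
    have hik : β (c i) (c k) = 0 := hc hki.symm
    simp [hik]

theorem exists_isOrthogonalReflection_span_range {K : Type*} [Field K] [Module K V]
    {β : LinearMap.BilinForm K V} [Finite ι] (hc : β.iIsOrtho c) (hne : ∀ i, β (c i) (c i) ≠ 0) :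
    ∃ j, IsOrthogonalReflection β (span K (Set.range c)) j := by
  have := Fintype.ofFinite ι
  refine ⟨∑ i, (β (c i)).smulRight ((2 / β (c i) (c i)) • c i) - LinearMap.id, ?_, fun x hx ↦ ?_⟩
  · refine LinearMap.eqOn_span' (g := LinearMap.id) ?_
    rintro _ ⟨k, rfl⟩
    have hsum : ∑ i, β (c i) (c k) • (2 / β (c i) (c i)) • c i = (2 : K) • c k := by
      rw [Finset.sum_eq_single k (fun i _ hik ↦ by rw [hc hik, zero_smul]) (by simp), smul_smul,
        mul_div_cancel₀ _ (hne k)]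
    simp [hsum, two_smul]
  · simp [mem_orthogonal_span_range_iff.1 hx]

end Reflection

section PositiveDefinite

variable {R V ι : Type*} [CommRing R] [LinearOrder R] [AddCommGroup V] [Module R V]
  {β : LinearMap.BilinForm R V}

/-- `β` is positive definite on the subspace `A`. -/
def PosDefOn (β : LinearMap.BilinForm R V) (A : Submodule R V) : Prop :=
  ∀ x ∈ A, x ≠ 0 → 0 < β x x

theorem posDefOn_span_range [IsStrictOrderedRing R] [Finite ι] {c : ι → V} (hc : β.iIsOrtho c)
    (hpos : ∀ i, 0 < β (c i) (c i)) : PosDefOn β (span R (Set.range c)) := by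
  have := Fintype.ofFinite ι
  intro x hx hx0
  obtain ⟨t, rfl⟩ := mem_span_range_iff_exists_fun R |>.1 hx
  rw [bilin_sum_smul_self hc]
  obtain ⟨i, -, hi⟩ := Finset.exists_ne_zero_of_sum_ne_zero hx0
  exact Finset.sum_pos' (fun i _ ↦ mul_nonneg (sq_nonneg _) (hpos i).le)
    ⟨i, Finset.mem_univ i, mul_pos (sq_pos_of_ne_zero (left_ne_zero_of_smul hi)) (hpos i)⟩

end PositiveDefinite

section PrincipalPairs

variable {V ι : Type*} [AddCommGroup V] [Module ℝ V] {β : LinearMap.BilinForm ℝ V}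
  {A B : Submodule ℝ V}

/-- The inner product that `β` induces on a subspace on which it is positive definite. -/
abbrev PosDefOn.innerProductCore (hA : PosDefOn β A) (hβ : β.IsSymm) :
    InnerProductSpace.Core ℝ A where
  inner x y := β x y
  conj_inner_symm x y := hβ.eq y x
  re_inner_nonneg x := by
    rcases eq_or_ne x 0 with rfl | hx
    · simp
    · exact (hA x x.2 (by simpa using hx)).le
  add_left x y z := by simp
  smul_left x y r := by simp
  definite x hx := by
    by_contra h
    exact (hA x x.2 (by simpa using h)).ne' hx

/-- Two `β`-orthonormal families `a` and `b` are principal when their cross Gram matrix is diagonal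
with nonnegative entries `σ`. In a Euclidean space the `σ i` are the cosines of the principal angles
between the spans of `a` and `b`; for an indefinite `β` they may exceed `1`. -/
structure IsPrincipalPair [DecidableEq ι] (β : LinearMap.BilinForm ℝ V) (a b : ι → V)
    (σ : ι → ℝ) : Prop where
  orthonormal_left : ∀ i k, β (a i) (a k) = if i = k then 1 else 0
  orthonormal_right : ∀ i k, β (b i) (b k) = if i = k then 1 else 0
  cross : ∀ i k, β (a i) (b k) = if i = k then σ i else 0
  nonneg : ∀ i, 0 ≤ σ i

theorem exists_isPrincipalPair [FiniteDimensional ℝ A] [FiniteDimensional ℝ B] (hβ : β.IsSymm)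
    (hA : PosDefOn β A) (hB : PosDefOn β B) {n : ℕ} (hnA : finrank ℝ A = n)
    (hnB : finrank ℝ B = n) :
    ∃ (a b : Fin n → V) (σ : Fin n → ℝ), IsPrincipalPair β a b σ ∧
      span ℝ (Set.range a) = A ∧ span ℝ (Set.range b) = B := by
  let := (hA.innerProductCore hβ).toNormedAddCommGroup
  let := InnerProductSpace.ofCore (hA.innerProductCore hβ).toCore
  let := (hB.innerProductCore hβ).toNormedAddCommGroup
  let := InnerProductSpace.ofCore (hB.innerProductCore hβ).toCore
  obtain ⟨a, b, σ, hσ, hab⟩ := exists_orthonormalBasis_bilin_eq_ite hnA hnB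
    (β.compl₁₂ A.subtype B.subtype)
  exact ⟨fun i ↦ a i, fun i ↦ b i, σ, ⟨a.inner_eq_ite, b.inner_eq_ite, hab, hσ⟩,
    by simpa using span_range_coe_basis a.toBasis, by simpa using span_range_coe_basis b.toBasis⟩

namespace IsPrincipalPair

variable [DecidableEq ι] {a b : ι → V} {σ : ι → ℝ}

theorem bilin_add_add (h : IsPrincipalPair β a b σ) (hβ : β.IsSymm) (i k : ι) :
    β (a i + b i) (a k + b k) = if i = k then 2 * (1 + σ i) else 0 := by
  simp only [map_add, LinearMap.add_apply, h.orthonormal_left, h.orthonormal_right, h.cross,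
    ← hβ.eq (a k) (b i), eq_comm (a := k)]
  split_ifs with hik
  · subst hik; ring
  · ring

theorem bilin_add_sub (h : IsPrincipalPair β a b σ) (hβ : β.IsSymm) (i k : ι) :
    β (a i + b i) (a k - b k) = 0 := by
  simp only [map_add, map_sub, LinearMap.add_apply, h.orthonormal_left, h.orthonormal_right,
    h.cross, ← hβ.eq (a k) (b i), eq_comm (a := k)]
  split_ifs with hik
  · subst hik; ring
  · ring

theorem iIsOrtho_add (h : IsPrincipalPair β a b σ) (hβ : β.IsSymm) : β.iIsOrtho (a + b) :=
  fun i k hik ↦ (h.bilin_add_add hβ i k).trans (if_neg hik)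

theorem bilin_add_self_pos (h : IsPrincipalPair β a b σ) (hβ : β.IsSymm) (i : ι) :
    0 < β ((a + b) i) ((a + b) i) := by
  have := h.nonneg i
  rw [Pi.add_apply, h.bilin_add_add hβ, if_pos rfl]
  positivity

theorem exists_isOrthogonalReflection [Finite ι] (h : IsPrincipalPair β a b σ) (hβ : β.IsSymm) :
    ∃ j, IsOrthogonalReflection β (span ℝ (Set.range (a + b))) j ∧ ∀ i, j (a i) = b i := by
  obtain ⟨j, hj⟩ := exists_isOrthogonalReflection_span_range (h.iIsOrtho_add hβ)
    fun i ↦ (h.bilin_add_self_pos hβ i).ne'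
  exact ⟨j, hj, fun i ↦ hj.apply_eq_of_add_mem_of_sub_mem two_ne_zero.isUnit
    (subset_span ⟨i, rfl⟩)
    (mem_orthogonal_span_range_iff.2 fun k ↦ h.bilin_add_sub hβ k i)⟩

end IsPrincipalPair

theorem reflecting_planes_general [FiniteDimensional ℝ A] [FiniteDimensional ℝ B]
    (hβ : β.IsSymm) (hA : PosDefOn β A) (hB : PosDefOn β B) (hAB : finrank ℝ A = finrank ℝ B) :
    ∃ (C : Submodule ℝ V) (j : V →ₗ[ℝ] V), FiniteDimensional ℝ C ∧
      finrank ℝ C = finrank ℝ A ∧ PosDefOn β C ∧ IsOrthogonalReflection β C j ∧ A.map j = B := by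
  obtain ⟨a, b, σ, h, ha, hb⟩ := exists_isPrincipalPair hβ hA hB rfl hAB.symm
  obtain ⟨j, hj, hjab⟩ := h.exists_isOrthogonalReflection hβ
  have hpos := h.bilin_add_self_pos hβ
  refine ⟨_, j, .span_of_finite ℝ (Set.finite_range (a + b)), ?_,
    posDefOn_span_range (h.iIsOrtho_add hβ) hpos, hj, ?_⟩
  · rw [finrank_span_eq_card (LinearMap.BilinForm.linearIndependent_of_iIsOrtho
      (h.iIsOrtho_add hβ) fun i ↦ (hpos i).ne'), Fintype.card_fin]
  · rw [← ha, ← hb, map_span, ← Set.range_comp, show j ∘ a = b from funext hjab]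

end PrincipalPairs

section Minkowski

/-- The form `-mg` as a bilinear form; the sign makes spacelike planes positive definite. -/
def spacelikeForm : LinearMap.BilinForm ℝ V4 :=
  LinearMap.mk₂ ℝ (fun x y ↦ -mg x y) (fun x y z ↦ by simp [mg]; ring)
    (fun c x y ↦ by simp [mg]; ring) (fun x y z ↦ by simp [mg]; ring)
    (fun c x y ↦ by simp [mg]; ring)

@[simp]
theorem spacelikeForm_apply (x y : V4) : spacelikeForm x y = -mg x y :=
  rfl

theorem mg_comm (x y : V4) : mg x y = mg y x := by
  simp only [mg, mul_comm]

theorem spacelikeForm_isSymm : spacelikeForm.IsSymm :=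
  ⟨fun x y ↦ by simp [mg_comm x y]⟩

theorem isSpacelikePlane_iff {S : Submodule ℝ V4} :
    IsSpacelikePlane S ↔ finrank ℝ S = 2 ∧ PosDefOn spacelikeForm S := by
  simp [IsSpacelikePlane, PosDefOn]

theorem isReflectionBy_iff {S : Submodule ℝ V4} {j : V4 →ₗ[ℝ] V4} :
    IsReflectionBy S j ↔ IsOrthogonalReflection spacelikeForm S j := by
  have hmem (x : V4) : x ∈ spacelikeForm.orthogonal S ↔ ∀ s ∈ S, mg x s = 0 := by
    simp [LinearMap.BilinForm.mem_orthogonal_iff, mg_comm x]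
  simp only [IsReflectionBy, ← hmem]
  exact ⟨fun h ↦ ⟨h.1, h.2⟩, fun h ↦ ⟨h.1, h.2⟩⟩

end Minkowski

theorem reflecting_planes (A B : Submodule ℝ V4)
    (hA : IsSpacelikePlane A) (hB : IsSpacelikePlane B) :
    ∃ (C : Submodule ℝ V4) (j : V4 →ₗ[ℝ] V4),
      IsSpacelikePlane C ∧ IsReflectionBy C j ∧ A.map j = B := by
  simp only [isSpacelikePlane_iff, isReflectionBy_iff] at *
  obtain ⟨C, j, -, hfin, hpos, hj, hmap⟩ :=
    reflecting_planes_general spacelikeForm_isSymm hA.2 hB.2 (hA.1.trans hB.1.symm)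
  exact ⟨C, j, ⟨hfin.trans hA.1, hpos⟩, hj, hmap⟩
end
end

section
/- If μ is a restricted Lorentz transformation whose polar decomposition μ = ρ_{e₀}β_{e₀} commutes (ρ_{e₀}β_{e₀} = β_{e₀}ρ_{e₀}) for every future-directed timelike unit vector e₀, then μ = 1. -/
/-!
Let `μ = ρβ` be the polar decomposition for the observer `e`. As `β` is an isometry that is
self-adjoint for the Euclidean product of `e`, the vector `β e + β⁻¹ e` is a multiple of `e`. If `ρ`
and `β` commute, then `μ e = β e` and `μ⁻¹ e = β⁻¹ e`, so `e` is an eigenvector of `μ + μ⁻¹`. The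
future-directed timelike vectors form a spanning set closed under addition, and a linear map having
all of them as eigenvectors is a scalar: `μ + μ⁻¹ = c`. Consequently
`g(μ x - x, μ x - x) = (2 - c) g(x, x)` for all `x`.

Since the dimension exceeds two, there is `x ≠ 0` such that `x` and `μ x - x` are both orthogonal
to a fixed timelike vector, and this forces `c ≤ 2`. Hence, for `v` timelike and future-directed,
`μ v - v` has nonnegative square; being orthogonal to the timelike vector `μ v + v`, it vanishes.
-/

noncomputable section

/-- The distinguished future-directed timelike unit vector. -/
def e0 : V4 := fun i => if i = 0 then 1 else 0

/-- A restricted Lorentz transformation: preserves the metric, has determinant 1,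
and preserves the time orientation. -/
def IsRestrictedLorentz (T : V4 →ₗ[ℝ] V4) : Prop :=
  (∀ x y, mg (T x) (T y) = mg x y) ∧ LinearMap.det T = 1 ∧ 0 < (T e0) 0

/-- The Euclidean inner product `⟨x,y⟩_e = -g(x,y) + 2 g(x,e) g(y,e)`
determined by a timelike unit vector `e`. -/
def inn (e x y : V4) : ℝ := -mg x y + 2 * mg x e * mg y e

/-- A rotation with respect to `e`: a restricted Lorentz transformation fixing `e`. -/
def IsRotationAt (e : V4) (T : V4 →ₗ[ℝ] V4) : Prop :=
  IsRestrictedLorentz T ∧ T e = e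

/-- A boost with respect to `e`: a restricted Lorentz transformation that is
self-adjoint and positive with respect to `⟨·,·⟩_e`. -/
def IsBoostAt (e : V4) (T : V4 →ₗ[ℝ] V4) : Prop :=
  IsRestrictedLorentz T ∧ (∀ x y, inn e (T x) y = inn e x (T y)) ∧
    (∀ x, x ≠ 0 → 0 < inn e (T x) x)

open Module Filter Topology
open LinearMap (BilinForm)

section EigenvectorCone

variable {R M : Type*} [CommRing R] [IsDomain R] [AddCommGroup M] [Module R M] [IsTorsionFree R M]

theorem eq_of_hasEigenvector_add {f : End R M} {u v : M} {a b k : R} (hu : f.HasEigenvector a u)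
    (hv : f.HasEigenvector b v) (huv : f.HasEigenvector k (u + v)) : a = b := by
  by_contra hab
  have hind : LinearIndependent R ![u, v] :=
    End.eigenvectors_linearIndependent' f ![a, b] (injective_pair_iff_ne.2 hab) _
      (Fin.forall_fin_two.2 ⟨hu, hv⟩)
  have hrel : (a - k) • u + (b - k) • v = 0 := by
    have h := huv.apply_eq_smul
    rw [map_add, hu.apply_eq_smul, hv.apply_eq_smul] at h
    linear_combination (norm := module) h
  obtain ⟨hak, hbk⟩ := LinearIndependent.pair_iff.1 hind _ _ hrel
  exact hab (sub_left_injective (hak.trans hbk.symm))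

theorem exists_eq_smul_id_of_forall_hasEigenvector {f : End R M} {s : Set M}
    (hspan : Submodule.span R s = ⊤) (hadd : ∀ u ∈ s, ∀ v ∈ s, u + v ∈ s)
    (hs : ∀ v ∈ s, ∃ a, f.HasEigenvector a v) : ∃ c : R, f = c • LinearMap.id := by
  rcases s.eq_empty_or_nonempty with rfl | ⟨u, hu⟩
  · exact ⟨0, LinearMap.ext_on hspan (by simp)⟩
  obtain ⟨c, hc⟩ := hs u hu
  refine ⟨c, LinearMap.ext_on hspan fun v hv ↦ ?_⟩
  obtain ⟨b, hb⟩ := hs v hv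
  obtain ⟨k, hk⟩ := hs (u + v) (hadd u hu v hv)
  rw [hb.apply_eq_smul, ← eq_of_hasEigenvector_add hc hb hk]
  rfl

end EigenvectorCone

theorem exists_ne_zero_apply_eq_zero_apply_eq_zero {K V : Type*} [Field K] [AddCommGroup V]
    [Module K V] [FiniteDimensional K V] (hdim : 2 < finrank K V) (f g : Dual K V) :
    ∃ x ≠ 0, f x = 0 ∧ g x = 0 := by
  have hker : LinearMap.ker (f.prod g) ≠ ⊥ :=
    LinearMap.ker_ne_bot_of_finrank_lt (by simpa using hdim)
  obtain ⟨x, hx, hx0⟩ := Submodule.exists_mem_ne_zero_of_ne_bot hker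
  exact ⟨x, hx0, congrArg Prod.fst hx, congrArg Prod.snd hx⟩

section Reflection

theorem det_preReflection {R M : Type*} [CommRing R] [AddCommGroup M] [Module R M] [Module.Free R M]
    [Module.Finite R M] (x : M) (f : Dual R M) :
    LinearMap.det (preReflection x f) = 1 - f x := by
  have h : preReflection x f = LinearMap.transvection (-f) x := by
    ext y
    simp [preReflection_apply, LinearMap.transvection.apply, sub_eq_add_neg]
  rw [h, LinearMap.transvection.det, LinearMap.neg_apply, sub_eq_add_neg]

variable {K V : Type*} [Field K] [AddCommGroup V] [Module K V] {B : BilinForm K V} {v : V}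

/-- The reflection `x ↦ x - 2 B(v, x) / B(v, v) • v` along `v`, negating `v` and fixing its
`B`-orthogonal complement. It is the identity if `B v v = 0`, as division by zero gives zero. -/
def reflectionAlong (B : BilinForm K V) (v : V) : V →ₗ[K] V :=
  preReflection v ((2 / B v v) • B v)

theorem reflectionAlong_apply (x : V) :
    reflectionAlong B v x = x - (2 / B v v * B v x) • v := by
  simp [reflectionAlong, preReflection_apply]

theorem reflectionAlong_reflectionAlong (hv : B v v ≠ 0) (x : V) :
    reflectionAlong B v (reflectionAlong B v x) = x :=
  involutive_preReflection (by simp [hv]) x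

theorem reflectionAlong_self (hv : B v v ≠ 0) : reflectionAlong B v v = -v :=
  preReflection_apply_self (by simp [hv])

theorem det_reflectionAlong [FiniteDimensional K V] (hv : B v v ≠ 0) :
    LinearMap.det (reflectionAlong B v) = -1 := by
  rw [reflectionAlong, det_preReflection, LinearMap.smul_apply, smul_eq_mul,
    div_mul_cancel₀ _ hv]
  norm_num

theorem apply_reflectionAlong (hB : B.IsSymm) (x y : V) :
    B (reflectionAlong B v x) y = B x (reflectionAlong B v y) := by
  simp only [reflectionAlong_apply, map_sub, map_smul, LinearMap.sub_apply, LinearMap.smul_apply,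
    smul_eq_mul, hB.eq x v]
  ring

theorem isOrthogonal_reflectionAlong (hB : B.IsSymm) (hv : B v v ≠ 0) :
    B.IsOrthogonal (reflectionAlong B v) := fun x y ↦ by
  rw [apply_reflectionAlong hB, reflectionAlong_reflectionAlong hv]

theorem reflectionAlong_add (hB : B.IsSymm) {e w : V} (hew : B e e = B w w)
    (hne : B (e + w) (e + w) ≠ 0) : reflectionAlong B (e + w) e = -w := by
  have hcoeff : 2 * B (e + w) e = B (e + w) (e + w) := by
    simp only [map_add, LinearMap.add_apply, hB.eq w e, ← hew]
    ring
  rw [reflectionAlong_apply, div_mul_eq_mul_div, hcoeff, div_self hne]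
  module

end Reflection

variable {V : Type*} [AddCommGroup V] [Module ℝ V] {B : BilinForm ℝ V} {t e u v x y : V}

/-- `B` is a Lorentzian scalar product, of signature `(+, -, -, …)`, and the timelike vector `t`
fixes its time orientation. The dimension may be infinite. -/
structure IsLorentzian (B : BilinForm ℝ V) (t : V) : Prop where
  symm : B.IsSymm
  pos : 0 < B t t
  neg_of_orthogonal : ∀ x, B x t = 0 → x ≠ 0 → B x x < 0

/-- The open cone of timelike vectors with the same time orientation as `t`. -/
def futureCone (B : BilinForm ℝ V) (t : V) : Set V :=
  {x | 0 < B x x ∧ 0 < B x t}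

/-- The Euclidean scalar product of an observer with four-velocity `e`: the sign of `B` is reversed
on the orthogonal complement of `e`. -/
def observerInner (B : BilinForm ℝ V) (e x y : V) : ℝ :=
  -B x y + 2 * B x e * B y e

namespace IsLorentzian

theorem nonpos_of_orthogonal (hB : IsLorentzian B t) (hx : B x t = 0) : B x x ≤ 0 := by
  rcases eq_or_ne x 0 with rfl | hx0
  · simp
  · exact (hB.neg_of_orthogonal x hx hx0).le

theorem eq_zero_of_orthogonal (hB : IsLorentzian B t) (hx : B x t = 0) (hxx : 0 ≤ B x x) :
    x = 0 := by
  by_contra hx0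
  exact (hB.neg_of_orthogonal x hx hx0).not_ge hxx

theorem sq_mul_add_sq_mul_le (hB : IsLorentzian B t) (u v : V) :
    B v t ^ 2 * B u u + B u t ^ 2 * B v v ≤ 2 * (B u t * B v t) * B u v := by
  -- The combination of `u` and `v` orthogonal to `t` has nonpositive square.
  have horth : B (B v t • u - B u t • v) t = 0 := by
    simp [mul_comm]
  have h := hB.nonpos_of_orthogonal horth
  simp only [map_sub, map_smul, LinearMap.sub_apply, LinearMap.smul_apply, smul_eq_mul,
    hB.symm.eq v u] at h
  linarith

theorem of_pos (hB : IsLorentzian B t) (hv : 0 < B v v) : IsLorentzian B v where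
  symm := hB.symm
  pos := hv
  neg_of_orthogonal x hxv hx0 := by
    by_contra! hxx
    have hxt : B x t = 0 := by
      by_contra hxt
      have h := hB.sq_mul_add_sq_mul_le x v
      rw [hxv, mul_zero] at h
      exact h.not_gt (by positivity)
    exact hx0 (hB.eq_zero_of_orthogonal hxt hxx)

theorem apply_pos (hB : IsLorentzian B t) (hu : u ∈ futureCone B t) (hv : v ∈ futureCone B t) :
    0 < B u v := by
  obtain ⟨huu, hut⟩ := hu
  obtain ⟨hvv, hvt⟩ := hv
  have h := hB.sq_mul_add_sq_mul_le u v
  have hlt : 0 < 2 * (B u t * B v t) * B u v := h.trans_lt' (by positivity)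
  exact pos_of_mul_pos_right hlt (by positivity)

theorem ext_right (hB : IsLorentzian B t) (h : ∀ z, B x z = B y z) : x = y := by
  have hsub : ∀ z, B (x - y) z = 0 := fun z ↦ by simp [h z]
  exact sub_eq_zero.1 (hB.eq_zero_of_orthogonal (hsub t) (hsub _).ge)

theorem injective_of_isOrthogonal (hB : IsLorentzian B t) {T : V →ₗ[ℝ] V}
    (hT : B.IsOrthogonal T) : Function.Injective T := fun x y hxy ↦
  hB.ext_right fun z ↦ by rw [← hT x, ← hT y, hxy]

theorem mul_self_lt_two_mul_sq (hB : IsLorentzian B v) (hx : x ≠ 0) :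
    B x x * B v v < 2 * B x v ^ 2 := by
  have hv := hB.pos
  rcases eq_or_ne (B x v) 0 with hxv | hxv
  · nlinarith [hB.neg_of_orthogonal x hxv hx]
  · have h := hB.sq_mul_add_sq_mul_le x v
    have : 0 < B x v ^ 2 := by positivity
    nlinarith

section FutureCone

theorem self_mem_futureCone (hB : IsLorentzian B t) : t ∈ futureCone B t :=
  ⟨hB.pos, hB.pos⟩

theorem add_mem_futureCone (hB : IsLorentzian B t) (hu : u ∈ futureCone B t)
    (hv : v ∈ futureCone B t) : u + v ∈ futureCone B t := by
  have huv := hB.apply_pos hu hv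
  obtain ⟨huu, hut⟩ := hu
  obtain ⟨hvv, hvt⟩ := hv
  constructor <;> simp only [map_add, LinearMap.add_apply, hB.symm.eq v u] <;> linarith

theorem futureCone_eq (hB : IsLorentzian B t) (hv : v ∈ futureCone B t) :
    futureCone B v = futureCone B t := by
  have htv : t ∈ futureCone B v := ⟨hB.pos, hB.symm.eq t v ▸ hv.2⟩
  ext x
  exact ⟨fun hx ↦ ⟨hx.1, (hB.of_pos hv.1).apply_pos hx htv⟩,
    fun hx ↦ ⟨hx.1, hB.apply_pos hx hv⟩⟩

theorem span_futureCone (hB : IsLorentzian B t) : Submodule.span ℝ (futureCone B t) = ⊤ := by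
  refine Submodule.eq_top_iff'.2 fun x ↦ ?_
  have hpos : ∀ {f : ℝ → ℝ}, Continuous f → 0 < f 0 → ∀ᶠ s in 𝓝[≠] 0, 0 < f s :=
    fun hf h0 ↦ ((hf.tendsto 0).eventually_const_lt h0).filter_mono nhdsWithin_le_nhds
  have htimelike : ∀ᶠ s : ℝ in 𝓝[≠] 0, 0 < B (t + s • x) (t + s • x) :=
    hpos (by simp only [map_add, map_smul, LinearMap.add_apply, LinearMap.smul_apply]; fun_prop)
      (by simpa using hB.pos)
  have hfuture : ∀ᶠ s : ℝ in 𝓝[≠] 0, 0 < B (t + s • x) t :=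
    hpos (by simp only [map_add, map_smul, LinearMap.add_apply, LinearMap.smul_apply]; fun_prop)
      (by simpa using hB.pos)
  obtain ⟨s, ⟨hs, hs'⟩, hs0⟩ :=
    ((htimelike.and hfuture).and (eventually_mem_nhdsWithin (s := {0}ᶜ))).exists
  have hx : x = s⁻¹ • (t + s • x - t) := by
    rw [add_sub_cancel_left, inv_smul_smul₀ hs0]
  rw [hx]
  exact Submodule.smul_mem _ _ (Submodule.sub_mem _ (Submodule.subset_span ⟨hs, hs'⟩)
    (Submodule.subset_span hB.self_mem_futureCone))

theorem map_mem_futureCone_iff (hB : IsLorentzian B t) {T : V → V} (hT : B.IsOrthogonal T)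
    (hv : v ∈ futureCone B t) (hTv : T v ∈ futureCone B t) :
    T x ∈ futureCone B t ↔ x ∈ futureCone B t := by
  calc T x ∈ futureCone B t ↔ T x ∈ futureCone B (T v) := by rw [hB.futureCone_eq hTv]
    _ ↔ x ∈ futureCone B v := by rw [futureCone, futureCone, Set.mem_ofPred_eq, hT, hT]; rfl
    _ ↔ x ∈ futureCone B t := by rw [hB.futureCone_eq hv]

end FutureCone

end IsLorentzian

theorem smul_mem_futureCone {r : ℝ} (hr : 0 < r) (hx : x ∈ futureCone B t) :
    r • x ∈ futureCone B t := by
  obtain ⟨hxx, hxt⟩ := hx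
  constructor <;> simp only [map_smul, LinearMap.smul_apply, smul_eq_mul] <;> positivity

theorem exists_eq_smul_unit (hv : v ∈ futureCone B t) :
    ∃ r : ℝ, ∃ e ∈ futureCone B t, B e e = 1 ∧ v = r • e := by
  have hr : 0 < √(B v v) := Real.sqrt_pos.2 hv.1
  refine ⟨√(B v v), (√(B v v))⁻¹ • v, smul_mem_futureCone (inv_pos.2 hr) hv, ?_,
    (smul_inv_smul₀ hr.ne' v).symm⟩
  simp only [map_smul, LinearMap.smul_apply, smul_eq_mul]
  field_simp
  exact (Real.sq_sqrt hv.1.le).symm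

section LorentzTransformations

/-- A restricted (proper orthochronous) Lorentz transformation of a space with Lorentzian scalar
product `B` and time orientation `t`. -/
structure IsProperOrthochronous (B : BilinForm ℝ V) (t : V) (T : V →ₗ[ℝ] V) : Prop where
  isOrthogonal : B.IsOrthogonal T
  det_eq_one : LinearMap.det T = 1
  future : 0 < B (T t) t

/-- A rotation for the observer `e`, i.e. an element of the stabilizer of `e`. -/
structure IsObserverRotation (B : BilinForm ℝ V) (t e : V) (T : V →ₗ[ℝ] V) : Prop where
  isProperOrthochronous : IsProperOrthochronous B t T
  apply_eq_self : T e = e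

/-- A boost for the observer `e`: self-adjoint and positive with respect to the Euclidean scalar
product `observerInner B e`. -/
structure IsObserverBoost (B : BilinForm ℝ V) (t e : V) (T : V →ₗ[ℝ] V) : Prop where
  isProperOrthochronous : IsProperOrthochronous B t T
  selfAdjoint : ∀ x y, observerInner B e (T x) y = observerInner B e x (T y)
  pos : ∀ x, x ≠ 0 → 0 < observerInner B e (T x) x

variable {T ρ β : V →ₗ[ℝ] V}

theorem IsProperOrthochronous.of_apply_mem_futureCone (hB : IsLorentzian B t)
    (hT : B.IsOrthogonal T) (hdet : LinearMap.det T = 1) (hv : v ∈ futureCone B t)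
    (hTv : T v ∈ futureCone B t) : IsProperOrthochronous B t T :=
  ⟨hT, hdet, ((hB.map_mem_futureCone_iff hT hv hTv).2 hB.self_mem_futureCone).2⟩

theorem IsProperOrthochronous.apply_mem_futureCone_iff (hB : IsLorentzian B t)
    (hT : IsProperOrthochronous B t T) : T x ∈ futureCone B t ↔ x ∈ futureCone B t :=
  hB.map_mem_futureCone_iff hT.isOrthogonal hB.self_mem_futureCone
    ⟨(hT.isOrthogonal t t).symm ▸ hB.pos, hT.future⟩

theorem observerInner_eq_neg_reflectionAlong (hB : B.IsSymm) (he : B e e = 1) (x y : V) :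
    observerInner B e x y = -B (reflectionAlong B e x) y := by
  simp only [observerInner, reflectionAlong_apply, he, map_sub, map_smul, LinearMap.sub_apply,
    LinearMap.smul_apply, smul_eq_mul, hB.eq x e, hB.eq y e]
  ring

theorem observerInner_comm (hB : B.IsSymm) (x y : V) :
    observerInner B e x y = observerInner B e y x := by
  simp only [observerInner, hB.eq x y]
  ring

-- The boost carrying `w` to `e` is the product of the reflections along `e + w` and `e`.
theorem isObserverBoost_reflectionAlong_comp [FiniteDimensional ℝ V] (hB : IsLorentzian B t)
    {w : V} (he : B e e = 1) (hw : B w w = 1) (hef : e ∈ futureCone B t)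
    (hwf : w ∈ futureCone B t) :
    IsObserverBoost B t e (reflectionAlong B e ∘ₗ reflectionAlong B (e + w)) := by
  have hv : 0 < B (e + w) (e + w) := (hB.add_mem_futureCone hef hwf).1
  have hee : B e e ≠ 0 := by simp [he]
  have hmap : (reflectionAlong B e ∘ₗ reflectionAlong B (e + w)) w = e := by
    rw [LinearMap.comp_apply, add_comm e w,
      reflectionAlong_add hB.symm (hw.trans he.symm) (add_comm e w ▸ hv.ne'), map_neg,
      reflectionAlong_self hee, neg_neg]
  have hinner : ∀ x y, observerInner B e ((reflectionAlong B e ∘ₗ reflectionAlong B (e + w)) x) y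
      = -B (reflectionAlong B (e + w) x) y := fun x y ↦ by
    rw [observerInner_eq_neg_reflectionAlong hB.symm he, LinearMap.comp_apply,
      reflectionAlong_reflectionAlong hee]
  refine ⟨.of_apply_mem_futureCone hB (fun x y ↦ ?_) ?_ hwf (hmap.symm ▸ hef), fun x y ↦ ?_,
    fun x hx ↦ ?_⟩
  · exact (isOrthogonal_reflectionAlong hB.symm hee _ _).trans
      (isOrthogonal_reflectionAlong hB.symm hv.ne' x y)
  · rw [LinearMap.det_comp, det_reflectionAlong hee, det_reflectionAlong hv.ne']
    norm_num
  · rw [observerInner_comm hB.symm x, hinner, hinner, apply_reflectionAlong hB.symm, hB.symm.eq]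
  · have hquad := (hB.of_pos hv).mul_self_lt_two_mul_sq hx
    rw [hinner, neg_pos, reflectionAlong_apply, map_sub, LinearMap.sub_apply, map_smul,
      LinearMap.smul_apply, smul_eq_mul, hB.symm.eq (e + w) x, sub_neg, div_mul_eq_mul_div,
      div_mul_eq_mul_div, lt_div_iff₀ hv]
    linarith

theorem exists_polar_decomposition [FiniteDimensional ℝ V] (hB : IsLorentzian B t)
    (hT : IsProperOrthochronous B t T) (he : B e e = 1) (hef : e ∈ futureCone B t) :
    ∃ ρ β, IsObserverRotation B t e ρ ∧ IsObserverBoost B t e β ∧ T = ρ ∘ₗ β := by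
  obtain ⟨w, rfl⟩ :=
    LinearMap.injective_iff_surjective.1 (hB.injective_of_isOrthogonal hT.isOrthogonal) e
  have hwf : w ∈ futureCone B t := (hT.apply_mem_futureCone_iff hB).1 hef
  have hw : B w w = 1 := by rw [← hT.isOrthogonal, he]
  set e := T w
  have hv : 0 < B (e + w) (e + w) := (hB.add_mem_futureCone hef hwf).1
  have hee : B e e ≠ 0 := by simp [he]
  have hfix : (T ∘ₗ reflectionAlong B (e + w) ∘ₗ reflectionAlong B e) e = e := by
    simp only [LinearMap.comp_apply]
    rw [reflectionAlong_self hee, map_neg, reflectionAlong_add hB.symm (he.trans hw.symm) hv.ne',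
      neg_neg]
  refine ⟨T ∘ₗ reflectionAlong B (e + w) ∘ₗ reflectionAlong B e, _, ⟨?_, hfix⟩,
    isObserverBoost_reflectionAlong_comp hB he hw hef hwf, LinearMap.ext fun x ↦ ?_⟩
  · refine .of_apply_mem_futureCone hB (fun x y ↦ ?_) ?_ hef (hfix.symm ▸ hef)
    · exact (hT.isOrthogonal _ _).trans ((isOrthogonal_reflectionAlong hB.symm hv.ne' _ _).trans
        (isOrthogonal_reflectionAlong hB.symm hee x y))
    · rw [LinearMap.det_comp, LinearMap.det_comp, hT.det_eq_one, det_reflectionAlong hee,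
        det_reflectionAlong hv.ne']
      norm_num
  · simp only [LinearMap.comp_apply]
    rw [reflectionAlong_reflectionAlong hee, reflectionAlong_reflectionAlong hv.ne']

theorem IsObserverBoost.apply_add_eq_smul (hB : IsLorentzian B t)
    (hβ : IsObserverBoost B t e β) (he : B e e = 1) {w : V} (hw : β w = e) :
    β e + w = (2 * B (β e) e) • e := by
  refine hB.ext_right fun z ↦ ?_
  have hadj : observerInner B e (β e) z = B w z := by
    calc observerInner B e (β e) z = observerInner B e e (β z) := hβ.selfAdjoint e z
      _ = B e (β z) := by
        rw [observerInner, he, hB.symm.eq (β z)]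
        ring
      _ = B (β w) (β z) := by rw [hw]
      _ = B w z := hβ.isProperOrthochronous.isOrthogonal w z
  rw [observerInner, hB.symm.eq z] at hadj
  simp only [map_add, LinearMap.add_apply, map_smul, LinearMap.smul_apply, smul_eq_mul]
  linarith

theorem apply_add_symm_apply_eq_smul_of_commute (hB : IsLorentzian B t) {f : V ≃ₗ[ℝ] V}
    (hρ : IsObserverRotation B t e ρ) (hβ : IsObserverBoost B t e β) (he : B e e = 1)
    (hf : (f : V →ₗ[ℝ] V) = ρ ∘ₗ β) (hcomm : ρ ∘ₗ β = β ∘ₗ ρ) :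
    f e + f.symm e = (2 * B (f e) e) • e := by
  have hfe : f e = β e := by
    have h := LinearMap.congr_fun (hf.trans hcomm) e
    rwa [LinearMap.comp_apply, hρ.apply_eq_self] at h
  have hsymm : β (f.symm e) = e := by
    refine hB.injective_of_isOrthogonal hρ.isProperOrthochronous.isOrthogonal ?_
    have h := LinearMap.congr_fun hf (f.symm e)
    rw [hρ.apply_eq_self, ← LinearMap.comp_apply, ← h]
    exact f.apply_symm_apply e
  rw [hfe]
  exact hβ.apply_add_eq_smul hB he hsymm

end LorentzTransformations

section Rigidity

variable {f : V ≃ₗ[ℝ] V} {c : ℝ}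

theorem apply_sub_self_of_add_symm_eq_smul (hB : B.IsSymm) (hf : B.IsOrthogonal f)
    (hc : ∀ x, f x + f.symm x = c • x) (x : V) :
    B (f x - x) (f x - x) = (2 - c) * B x x := by
  have hsymm : B (f.symm x) x = B (f x) x := by
    rw [← hf, f.apply_symm_apply, hB.eq]
  have htrace : 2 * B (f x) x = c * B x x := by
    rw [← smul_eq_mul c, ← LinearMap.smul_apply, ← map_smul, ← hc, map_add, LinearMap.add_apply,
      hsymm, two_mul]
  simp only [map_sub, LinearMap.sub_apply, hf x x, hB.eq x (f x)]
  linarith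

-- If `c > 2`, then `f - 1` exchanges timelike and spacelike vectors; this is impossible because
-- there is more than one spacelike dimension but only one timelike one.
theorem le_two_of_add_symm_eq_smul (hB : IsLorentzian B t) (hdim : 2 < finrank ℝ V)
    (hf : B.IsOrthogonal f) (hc : ∀ x, f x + f.symm x = c • x) : c ≤ 2 := by
  have := finite_of_finrank_pos (two_pos.trans hdim)
  obtain ⟨x, hx0, hxt, hfxt⟩ := exists_ne_zero_apply_eq_zero_apply_eq_zero hdim (B.flip t)
    (B.flip t ∘ₗ ((f : V →ₗ[ℝ] V) - LinearMap.id))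
  have hspacelike : B x x < 0 := hB.neg_of_orthogonal x hxt hx0
  have hdiff : B (f x - x) (f x - x) ≤ 0 := hB.nonpos_of_orthogonal hfxt
  rw [apply_sub_self_of_add_symm_eq_smul hB.symm hf hc] at hdiff
  nlinarith

theorem eq_id_of_add_symm_eq_smul (hB : IsLorentzian B t) (hdim : 2 < finrank ℝ V)
    (hf : IsProperOrthochronous B t f) (hc : ∀ x, f x + f.symm x = c • x) :
    (f : V →ₗ[ℝ] V) = LinearMap.id := by
  have hc2 := le_two_of_add_symm_eq_smul hB hdim hf.isOrthogonal hc
  refine LinearMap.ext_on hB.span_futureCone fun v hv ↦ sub_eq_zero.1 ?_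
  have hsum : f v + v ∈ futureCone B t :=
    hB.add_mem_futureCone ((hf.apply_mem_futureCone_iff hB).2 hv) hv
  -- `f v` and `v` have equal length, so their difference is orthogonal to their timelike sum.
  have horth : B (f v - v) (f v + v) = 0 := by
    simp only [map_add, map_sub, LinearMap.sub_apply, hB.symm.eq v (f v)]
    have hlen : B (f v) (f v) = B v v := hf.isOrthogonal v v
    linarith
  refine (hB.of_pos hsum.1).eq_zero_of_orthogonal horth ?_
  have hdiff := apply_sub_self_of_add_symm_eq_smul hB.symm hf.isOrthogonal hc v
  exact hdiff.ge.trans' (mul_nonneg (sub_nonneg.2 hc2) hv.1.le)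

end Rigidity

theorem commuting_polar_decompositions_imply_identity_general (hB : IsLorentzian B t)
    (hdim : 2 < finrank ℝ V) {μ : V →ₗ[ℝ] V} (hμ : IsProperOrthochronous B t μ)
    (hcomm : ∀ e ρ β, B e e = 1 → 0 < B e t → IsObserverRotation B t e ρ →
      IsObserverBoost B t e β → μ = ρ ∘ₗ β → ρ ∘ₗ β = β ∘ₗ ρ) :
    μ = LinearMap.id := by
  have := finite_of_finrank_pos (two_pos.trans hdim)
  obtain ⟨f, rfl⟩ : ∃ f : V ≃ₗ[ℝ] V, (f : V →ₗ[ℝ] V) = μ :=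
    ⟨.ofInjectiveEndo μ (hB.injective_of_isOrthogonal hμ.isOrthogonal), rfl⟩
  have heigen : ∀ v ∈ futureCone B t,
      ∃ a, End.HasEigenvector ((f : V →ₗ[ℝ] V) + (f.symm : V →ₗ[ℝ] V)) a v := fun v hv ↦ by
    obtain ⟨r, e, hef, he, rfl⟩ := exists_eq_smul_unit hv
    obtain ⟨ρ, β, hρ, hβ, hf⟩ := exists_polar_decomposition hB hμ he hef
    have hfe := apply_add_symm_apply_eq_smul_of_commute hB hρ hβ he hf
      (hcomm e ρ β he hef.2 hρ hβ hf)
    refine ⟨2 * B (f e) e, End.mem_eigenspace_iff.2 ?_, fun h0 ↦ by simp [h0, futureCone] at hv⟩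
    rw [map_smul, smul_comm, ← hfe]
    rfl
  obtain ⟨c, hc⟩ := exists_eq_smul_id_of_forall_hasEigenvector hB.span_futureCone
    (fun u hu v hv ↦ hB.add_mem_futureCone hu hv) heigen
  exact eq_id_of_add_symm_eq_smul hB hdim hμ fun x ↦ LinearMap.congr_fun hc x

section Minkowski

/-- The Minkowski metric `mg` as a bilinear form. -/
def minkowskiForm : BilinForm ℝ V4 :=
  LinearMap.mk₂ ℝ mg (fun _ _ _ ↦ by simp only [mg, Pi.add_apply]; ring)
    (fun _ _ _ ↦ by simp only [mg, Pi.smul_apply, smul_eq_mul]; ring)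
    (fun _ _ _ ↦ by simp only [mg, Pi.add_apply]; ring)
    (fun _ _ _ ↦ by simp only [mg, Pi.smul_apply, smul_eq_mul]; ring)

theorem minkowskiForm_apply (x y : V4) : minkowskiForm x y = mg x y := rfl

theorem minkowskiForm_e0 (x : V4) : minkowskiForm x e0 = x 0 := by
  simp [minkowskiForm_apply, mg, e0]

theorem isLorentzian_minkowskiForm : IsLorentzian minkowskiForm e0 where
  symm := ⟨fun x y ↦ by simp only [minkowskiForm_apply, mg]; ring⟩
  pos := by simp [minkowskiForm_e0, e0]
  neg_of_orthogonal x hx hx0 := by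
    rw [minkowskiForm_e0] at hx
    contrapose! hx0
    simp only [minkowskiForm_apply, mg, hx] at hx0
    have h1 : x 1 = 0 := by nlinarith
    have h2 : x 2 = 0 := by nlinarith
    have h3 : x 3 = 0 := by nlinarith
    ext i
    fin_cases i <;> assumption

theorem isRestrictedLorentz_iff {T : V4 →ₗ[ℝ] V4} :
    IsRestrictedLorentz T ↔ IsProperOrthochronous minkowskiForm e0 T where
  mp := fun ⟨hT, hdet, hfut⟩ ↦ ⟨hT, hdet, hfut.trans_eq (minkowskiForm_e0 _).symm⟩
  mpr := fun ⟨hT, hdet, hfut⟩ ↦ ⟨hT, hdet, hfut.trans_eq (minkowskiForm_e0 _)⟩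

end Minkowski

/-- If the polar decomposition of a restricted Lorentz transformation `μ` commutes
with respect to every future-directed timelike unit vector `e`, then `μ = 1`. -/
theorem commuting_polar_decompositions_imply_identity
    (μ : V4 →ₗ[ℝ] V4) (hμ : IsRestrictedLorentz μ)
    (hcomm : ∀ (e : V4) (ρ β : V4 →ₗ[ℝ] V4), mg e e = 1 → 0 < e 0 →
      IsRotationAt e ρ → IsBoostAt e β → μ = ρ ∘ₗ β → ρ ∘ₗ β = β ∘ₗ ρ) :
    μ = LinearMap.id := by
  refine commuting_polar_decompositions_imply_identity_general isLorentzian_minkowskiForm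
    (by simp) (isRestrictedLorentz_iff.1 hμ) fun e ρ β he hefut hρ hβ ↦ ?_
  exact hcomm e ρ β he (minkowskiForm_e0 e ▸ hefut)
    ⟨isRestrictedLorentz_iff.2 hρ.isProperOrthochronous, hρ.apply_eq_self⟩
    ⟨isRestrictedLorentz_iff.2 hβ.isProperOrthochronous, hβ.selfAdjoint, hβ.pos⟩
end
end
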